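/- Γ_{ij} is half the logarithmic λ_j-derivative of g_i (identity (c2)): Let U ⊆ ℝ^N be open with coordinates λ₁,…,λ_N, and let ξ₁,…,ξ_N, τ : U → ℂ be C² functions with τ taking values in the upper half-plane, satisfying the elliptic Gibbons–Tsarev system, with all theta-function values appearing in denominators (including S'(ξ_i,τ)) nonzero on U. Then for all i ≠ j one has ∂/∂λ_j [ S'(ξ_i,τ)² ∂τ/∂λ_i ] = −(1/(2πi)) S'(ξ_i,τ) S'(ξ_j,τ) S''(ξ_i−ξ_j,τ) (∂τ/∂λ_i)(∂τ/∂λ_j) on U; equivalently, Γ_{ij} := −(1/(4πi))(S'(ξ_j,τ)/S'(ξ_i,τ)) S''(ξ_i−ξ_j,τ) ∂τ/∂λ_j satisfies 2 Γ_{ij} g_i = ∂g_i/∂λ_j where g_i = (1/(4πi)) S'(ξ_i,τ)² ∂τ/∂λ_i. -/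

import Mathlib

open Complex

/-- Jacobi theta function θ₁(u,τ). -/
noncomputable def theta1 (u τ : ℂ) : ℂ :=
  -∑' k : ℤ, Complex.exp ((Real.pi : ℂ) * Complex.I * τ * ((k : ℂ) + 1/2)^2
      + 2 * (Real.pi : ℂ) * Complex.I * (u + 1/2) * ((k : ℂ) + 1/2))

/-- Jacobi theta function θ₂(u,τ). -/
noncomputable def theta2 (u τ : ℂ) : ℂ :=
  ∑' k : ℤ, Complex.exp ((Real.pi : ℂ) * Complex.I * τ * ((k : ℂ) + 1/2)^2
      + 2 * (Real.pi : ℂ) * Complex.I * u * ((k : ℂ) + 1/2))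

/-- Jacobi theta function θ₃(u,τ). -/
noncomputable def theta3 (u τ : ℂ) : ℂ :=
  ∑' k : ℤ, Complex.exp ((Real.pi : ℂ) * Complex.I * τ * (k : ℂ)^2
      + 2 * (Real.pi : ℂ) * Complex.I * u * (k : ℂ))

/-- Jacobi theta function θ₄(u,τ). -/
noncomputable def theta4 (u τ : ℂ) : ℂ :=
  ∑' k : ℤ, Complex.exp ((Real.pi : ℂ) * Complex.I * τ * (k : ℂ)^2
      + 2 * (Real.pi : ℂ) * Complex.I * (u + 1/2) * (k : ℂ))

/-- ζ_a(u,τ) = θ_a'(u,τ)/θ_a(u,τ). -/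
noncomputable def zeta1 (u τ : ℂ) : ℂ := deriv (fun v => theta1 v τ) u / theta1 u τ
noncomputable def zeta2 (u τ : ℂ) : ℂ := deriv (fun v => theta2 v τ) u / theta2 u τ
noncomputable def zeta3 (u τ : ℂ) : ℂ := deriv (fun v => theta3 v τ) u / theta3 u τ
noncomputable def zeta4 (u τ : ℂ) : ℂ := deriv (fun v => theta4 v τ) u / theta4 u τ

/-- ℘_a(u,τ) = −∂_u ζ_a(u,τ). -/
noncomputable def wp1 (u τ : ℂ) : ℂ := -deriv (fun v => zeta1 v τ) u
noncomputable def wp2 (u τ : ℂ) : ℂ := -deriv (fun v => zeta2 v τ) u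
noncomputable def wp1' (u τ : ℂ) : ℂ := deriv (fun v => wp1 v τ) u
noncomputable def wp2' (u τ : ℂ) : ℂ := deriv (fun v => wp2 v τ) u

/-- S'(u,τ) = ζ₁(u,τ) − ζ₄(u,τ). -/
noncomputable def Sp (u τ : ℂ) : ℂ := zeta1 u τ - zeta4 u τ
/-- S''(u,τ) = ∂_u S'(u,τ). -/
noncomputable def Spp (u τ : ℂ) : ℂ := deriv (fun v => Sp v τ) u
/-- S'''(u,τ) = ∂_u S''(u,τ). -/
noncomputable def Sppp (u τ : ℂ) : ℂ := deriv (fun v => Spp v τ) u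

/-- Partial derivative in the j-th coordinate of a ℂ-valued function on ℝ^N. -/
noncomputable def pdC {N : ℕ} (j : Fin N) (f : (Fin N → ℝ) → ℂ) (x : Fin N → ℝ) : ℂ :=
  fderiv ℝ f x (Pi.single j 1)

/-- Partial derivative in the j-th coordinate of an ℝ-valued function on ℝ^d. -/
noncomputable def pd {d : ℕ} (j : Fin d) (f : (Fin d → ℝ) → ℝ) (x : Fin d → ℝ) : ℝ :=
  fderiv ℝ f x (Pi.single j 1)

/-- Γ_{ij} = −(1/(4πi)) (S'(ξ_j,τ)/S'(ξ_i,τ)) S''(ξ_i−ξ_j,τ) ∂τ/∂λ_j. -/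
noncomputable def Gam {N : ℕ} (ξ : Fin N → (Fin N → ℝ) → ℂ) (τ : (Fin N → ℝ) → ℂ)
    (i j : Fin N) (x : Fin N → ℝ) : ℂ :=
  -(1 / (4 * (Real.pi : ℂ) * Complex.I)) * (Sp (ξ j x) (τ x) / Sp (ξ i x) (τ x))
    * Spp (ξ i x - ξ j x) (τ x) * pdC j τ x

/-- g_i = (1/(4πi)) S'(ξ_i,τ)² ∂τ/∂λ_i. -/
noncomputable def gMetric {N : ℕ} (ξ : Fin N → (Fin N → ℝ) → ℂ) (τ : (Fin N → ℝ) → ℂ)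
    (i : Fin N) (x : Fin N → ℝ) : ℂ :=
  1 / (4 * (Real.pi : ℂ) * Complex.I) * Sp (ξ i x) (τ x) ^ 2 * pdC i τ x

/-!
The theta functions solve the heat equation, so `ζ_a = θ_a' / θ_a` solves the Burgers equation
`4πi ∂ζ_a/∂τ = ∂(ζ_a' + ζ_a²)/∂u`. Subtracting, and using Landen's transformation
`ζ₁(u, τ/2) = ζ₁(u, τ) + ζ₄(u, τ) =: Z(u)`, gives `4πi ∂S'/∂τ = ∂(S'' + S'Z)/∂u`. Products of theta
functions at `τ/2`, expanded at `τ`, show that `S' = κ θ₂/θ₁` at `τ/2` with `κ` independent of `u`,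
and yield the addition formula
`S'(v) S'(w) + (S'' + S'Z)(v + w) = S'(v + w) (Z(v) + Z(w))`.
Its `w`-derivative at `v = ξ_j`, `w = ξ_i - ξ_j` evaluates `∂S'/∂τ` at `ξ_i`. In `∂S'(ξ_i, τ)/∂λ_j`
the terms with `Z` then cancel by the first Gibbons–Tsarev equation, and in the derivative of
`S'(ξ_i, τ)² ∂τ/∂λ_i` the terms with `℘₁` cancel by the second.
-/

section

open scoped Real

open Filter Topology

/-! ### The heat equation -/

/-- `f` is complex differentiable at `(u, τ)` with `∂f/∂u = a` and `∂f/∂τ = b` there. -/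
def HasPartialDerivsAt (f : ℂ → ℂ → ℂ) (a b u τ : ℂ) : Prop :=
  HasFDerivAt (fun p : ℂ × ℂ ↦ f p.1 p.2)
    (a • ContinuousLinearMap.fst ℂ ℂ ℂ + b • ContinuousLinearMap.snd ℂ ℂ ℂ) (u, τ)

namespace HasPartialDerivsAt

variable {f g : ℂ → ℂ → ℂ} {a b a' b' u τ : ℂ}

theorem hasFDerivAt (hf : HasPartialDerivsAt f a b u τ) :
    HasFDerivAt (fun p : ℂ × ℂ ↦ f p.1 p.2)
      (a • ContinuousLinearMap.fst ℂ ℂ ℂ + b • ContinuousLinearMap.snd ℂ ℂ ℂ) (u, τ) :=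
  hf

theorem hasDerivAt_left (hf : HasPartialDerivsAt f a b u τ) : HasDerivAt (f · τ) a u := by
  simpa [Function.comp_def] using
    hf.hasFDerivAt.comp_hasDerivAt u ((hasDerivAt_id u).prodMk (hasDerivAt_const u τ))

theorem congr_of_im_pos (hf : HasPartialDerivsAt f a b u τ) (hτ : 0 < τ.im)
    (hfg : ∀ u τ, 0 < τ.im → g u τ = f u τ) : HasPartialDerivsAt g a b u τ := by
  have him : ∀ᶠ p : ℂ × ℂ in 𝓝 (u, τ), 0 < p.2.im :=
    (continuous_im.comp continuous_snd).continuousAt.eventually_const_lt hτ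
  exact HasFDerivAt.congr_of_eventuallyEq hf (him.mono fun p hp ↦ hfg p.1 p.2 hp)

theorem sub (hf : HasPartialDerivsAt f a b u τ) (hg : HasPartialDerivsAt g a' b' u τ) :
    HasPartialDerivsAt (fun u τ ↦ f u τ - g u τ) (a - a') (b - b') u τ :=
  (HasFDerivAt.sub hf hg).congr_fderiv (by module)

theorem div (hf : HasPartialDerivsAt f a b u τ) (hg : HasPartialDerivsAt g a' b' u τ)
    (hgu : g u τ ≠ 0) :
    HasPartialDerivsAt (fun u τ ↦ f u τ / g u τ) ((a * g u τ - f u τ * a') / g u τ ^ 2)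
      ((b * g u τ - f u τ * b') / g u τ ^ 2) u τ := by
  refine (HasFDerivAt.mul hf ((hasDerivAt_inv hgu).comp_hasFDerivAt (u, τ) hg)).congr_fderiv ?_
  simp only [Function.comp_apply]
  match_scalars <;> field_simp <;> ring

theorem comp_affine {c d e : ℂ} (hf : HasPartialDerivsAt f a b (c * u + d) (e * τ)) :
    HasPartialDerivsAt (fun u τ ↦ f (c * u + d) (e * τ)) (c * a) (e * b) u τ := by
  have hu : HasFDerivAt (fun p : ℂ × ℂ ↦ c * p.1 + d) (c • ContinuousLinearMap.fst ℂ ℂ ℂ) (u, τ) :=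
    (hasFDerivAt_fst.const_mul c).add_const d
  have hτ : HasFDerivAt (fun p : ℂ × ℂ ↦ e * p.2) (e • ContinuousLinearMap.snd ℂ ℂ ℂ) (u, τ) :=
    hasFDerivAt_snd.const_mul e
  refine (hf.hasFDerivAt.comp (u, τ) (hu.prodMk hτ)).congr_fderiv ?_
  ext <;> simp [mul_comm]

theorem const_mul (hf : HasPartialDerivsAt f a b u τ) (c : ℂ) :
    HasPartialDerivsAt (fun u τ ↦ c * f u τ) (c * a) (c * b) u τ :=
  (HasFDerivAt.const_mul hf c).congr_fderiv (by module)

end HasPartialDerivsAt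

/-- `F` solves the heat equation `4πi ∂F/∂τ = ∂²F/∂u²` for `0 < im τ`. Joint differentiability of
all `u`-derivatives is part of the definition, which saves an appeal to Hartogs' theorem. -/
def IsHeatSolution (F : ℂ → ℂ → ℂ) : Prop :=
  ∀ (n : ℕ) (u τ : ℂ), 0 < τ.im →
    HasPartialDerivsAt (fun u τ ↦ iteratedDeriv n (F · τ) u) (iteratedDeriv (n + 1) (F · τ) u)
      ((4 * π * I)⁻¹ * iteratedDeriv (n + 2) (F · τ) u) u τ

namespace IsHeatSolution

variable {F G : ℂ → ℂ → ℂ} {τ : ℂ}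

theorem hasDerivAt_iteratedDeriv (hF : IsHeatSolution F) (hτ : 0 < τ.im) (n : ℕ) (u : ℂ) :
    HasDerivAt (iteratedDeriv n (F · τ)) (iteratedDeriv (n + 1) (F · τ) u) u :=
  (hF n u τ hτ).hasDerivAt_left

theorem differentiable_left (hF : IsHeatSolution F) (hτ : 0 < τ.im) :
    Differentiable ℂ (F · τ) := fun u ↦ by
  simpa using (hF.hasDerivAt_iteratedDeriv hτ 0 u).differentiableAt

theorem continuousAt (hF : IsHeatSolution F) (hτ : 0 < τ.im) (u : ℂ) :
    ContinuousAt (fun p : ℂ × ℂ ↦ F p.1 p.2) (u, τ) := by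
  simpa using (hF 0 u τ hτ).hasFDerivAt.continuousAt

theorem congr (hF : IsHeatSolution F) (hGF : ∀ u τ, 0 < τ.im → G u τ = F u τ) :
    IsHeatSolution G := fun n u τ hτ ↦ by
  have slice_eq (τ : ℂ) (hτ : 0 < τ.im) : (G · τ) = (F · τ) := funext (hGF · τ hτ)
  rw [slice_eq τ hτ]
  exact (hF n u τ hτ).congr_of_im_pos hτ fun u τ hτ ↦ by rw [slice_eq τ hτ]

theorem sub (hF : IsHeatSolution F) (hG : IsHeatSolution G) :
    IsHeatSolution (fun u τ ↦ F u τ - G u τ) := by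
  have iteratedDeriv_sub_left (n : ℕ) (u τ : ℂ) (hτ : 0 < τ.im) :
      iteratedDeriv n (fun v ↦ F v τ - G v τ) u
        = iteratedDeriv n (F · τ) u - iteratedDeriv n (G · τ) u :=
    iteratedDeriv_fun_sub (hF.differentiable_left hτ).contDiff.contDiffAt
      (hG.differentiable_left hτ).contDiff.contDiffAt
  intro n u τ hτ
  rw [iteratedDeriv_sub_left _ u τ hτ, iteratedDeriv_sub_left _ u τ hτ, mul_sub]
  exact ((hF n u τ hτ).sub (hG n u τ hτ)).congr_of_im_pos hτ (iteratedDeriv_sub_left n)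

theorem neg (hF : IsHeatSolution F) : IsHeatSolution (fun u τ ↦ -F u τ) := fun n u τ hτ ↦ by
  simp only [iteratedDeriv_fun_neg, mul_neg]
  exact (HasFDerivAt.neg (hF n u τ hτ)).congr_fderiv (by module)

theorem comp_parabolic (hF : IsHeatSolution F) {c : ℝ} (hc : 0 < c) (d : ℂ) :
    IsHeatSolution (fun u τ ↦ F (c * u + d) (c ^ 2 * τ)) := by
  have im_pos {τ : ℂ} (hτ : 0 < τ.im) : 0 < ((c : ℂ) ^ 2 * τ).im := by
    rw [← ofReal_pow, im_ofReal_mul]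
    positivity
  have iteratedDeriv_comp (n : ℕ) (u τ : ℂ) (hτ : 0 < τ.im) :
      iteratedDeriv n (fun v ↦ F (c * v + d) (c ^ 2 * τ)) u
        = c ^ n * iteratedDeriv n (F · (c ^ 2 * τ)) (c * u + d) := by
    have hd : ContDiff ℂ n fun v ↦ F (v + d) (c ^ 2 * τ) :=
      ((hF.differentiable_left (im_pos hτ)).comp (differentiable_id.add_const d)).contDiff
    rw [iteratedDeriv_comp_const_mul hd, iteratedDeriv_comp_add_const n (F · (c ^ 2 * τ)) d]
  intro n u τ hτ
  have h := (hF n (c * u + d) _ (im_pos hτ)).comp_affine.const_mul (c ^ n)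
  rw [iteratedDeriv_comp _ u τ hτ, iteratedDeriv_comp _ u τ hτ]
  convert h.congr_of_im_pos hτ (iteratedDeriv_comp n) using 1 <;> ring

end IsHeatSolution

theorem hasFDerivAt_pow_mul_jacobiTheta₂_term (n : ℕ) (m : ℤ) (u τ : ℂ) :
    HasFDerivAt (fun p : ℂ × ℂ ↦ (2 * π * I * m) ^ n * jacobiTheta₂_term m p.1 p.2)
      ((2 * π * I * m) ^ n • jacobiTheta₂_term_fderiv m u τ) (u, τ) :=
  (hasFDerivAt_jacobiTheta₂_term m u τ).const_mul _

theorem norm_two_pi_I_mul_intCast (m : ℤ) : ‖2 * π * I * m‖ = 2 * π * |(m : ℝ)| := by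
  simp [abs_of_pos Real.pi_pos]

theorem norm_pow_mul_jacobiTheta₂_term_le {S T : ℝ} (hT : 0 < T) {u τ : ℂ} (hu : |u.im| ≤ S)
    (hτ : T ≤ τ.im) (n : ℕ) (m : ℤ) :
    ‖(2 * π * I * m) ^ n * jacobiTheta₂_term m u τ‖
      ≤ (2 * π) ^ n * (|m| ^ n * Real.exp (-π * (T * m ^ 2 - 2 * S * |m|))) := by
  rw [norm_mul, norm_pow, norm_two_pi_I_mul_intCast, mul_pow, mul_assoc, Int.cast_abs]
  gcongr
  simpa using norm_jacobiTheta₂_term_le hT hu hτ m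

theorem norm_pow_smul_jacobiTheta₂_term_fderiv_le {S T : ℝ} (hT : 0 < T) {u τ : ℂ}
    (hu : |u.im| ≤ S) (hτ : T ≤ τ.im) (n : ℕ) (m : ℤ) :
    ‖(2 * π * I * m) ^ n • jacobiTheta₂_term_fderiv m u τ‖
      ≤ (2 * π) ^ n * (3 * π) * (|m| ^ (n + 2) * Real.exp (-π * (T * m ^ 2 - 2 * S * |m|))) := by
  have hterm := norm_jacobiTheta₂_term_le hT hu hτ m
  calc ‖(2 * π * I * m) ^ n • jacobiTheta₂_term_fderiv m u τ‖
      = (2 * π * |m|) ^ n * ‖jacobiTheta₂_term_fderiv m u τ‖ := by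
        rw [norm_smul, norm_pow, norm_two_pi_I_mul_intCast, Int.cast_abs]
    _ ≤ (2 * π * |m|) ^ n * (3 * π * |m| ^ 2 * Real.exp (-π * (T * m ^ 2 - 2 * S * |m|))) := by
        grw [norm_jacobiTheta₂_term_fderiv_le, hterm]
    _ = _ := by ring

theorem summable_pow_mul_jacobiTheta₂_term (n : ℕ) (u : ℂ) {τ : ℂ} (hτ : 0 < τ.im) :
    Summable fun m : ℤ ↦ (2 * π * I * m) ^ n * jacobiTheta₂_term m u τ :=
  .of_norm_bounded ((summable_pow_mul_jacobiTheta₂_term_bound |u.im| hτ n).mul_left _)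
    (norm_pow_mul_jacobiTheta₂_term_le hτ le_rfl le_rfl n)

theorem hasPartialDerivsAt_tsum_pow_mul_jacobiTheta₂_term (n : ℕ) (u : ℂ) {τ : ℂ}
    (hτ : 0 < τ.im) :
    HasPartialDerivsAt (fun u τ ↦ ∑' m : ℤ, (2 * π * I * m) ^ n * jacobiTheta₂_term m u τ)
      (∑' m : ℤ, (2 * π * I * m) ^ (n + 1) * jacobiTheta₂_term m u τ)
      ((4 * π * I)⁻¹ * ∑' m : ℤ, (2 * π * I * m) ^ (n + 2) * jacobiTheta₂_term m u τ) u τ := by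
  obtain ⟨T, hT, hTτ⟩ := exists_between hτ
  obtain ⟨S, hS⟩ := exists_gt |u.im|
  let V : Set (ℂ × ℂ) := {z | |z.im| < S} ×ˢ {z | T < z.im}
  have hVo : IsOpen V :=
    (isOpen_lt (by fun_prop) continuous_const).prod (isOpen_lt continuous_const continuous_im)
  have hVc : IsPreconnected V := by
    refine (Convex.isPreconnected ?_).prod (convex_halfSpace_im_gt T).isPreconnected
    simpa only [abs_lt] using! (convex_halfSpace_im_gt _).inter (convex_halfSpace_im_lt _)
  have hsum (k : ℕ) : Summable fun m : ℤ ↦ (2 * π * I * m) ^ k * jacobiTheta₂_term m u τ :=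
    summable_pow_mul_jacobiTheta₂_term k u hτ
  have huτ : (u, τ) ∈ V := ⟨hS, hTτ⟩
  have hderiv := hasFDerivAt_tsum_of_isPreconnected
    ((summable_pow_mul_jacobiTheta₂_term_bound S hT (n + 2)).mul_left _) hVo hVc
    (fun m p _ ↦ hasFDerivAt_pow_mul_jacobiTheta₂_term n m p.1 p.2)
    (fun m p hp ↦ norm_pow_smul_jacobiTheta₂_term_fderiv_le hT hp.1.le hp.2.le n m)
    huτ (hsum n) huτ
  have hfderiv := ((hsum (n + 1)).hasSum.smul_const (ContinuousLinearMap.fst ℂ ℂ ℂ)).add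
    (((hsum (n + 2)).hasSum.mul_left (4 * π * I)⁻¹).smul_const (ContinuousLinearMap.snd ℂ ℂ ℂ))
  refine hderiv.congr_fderiv (.trans (tsum_congr fun m ↦ ?_) hfderiv.tsum_eq)
  have heat : (4 * π * I)⁻¹ * (2 * π * I * m) ^ (n + 2)
      = (2 * π * I * m) ^ n * (π * I * m ^ 2) := by
    field_simp
    ring
  rw [jacobiTheta₂_term_fderiv, ← jacobiTheta₂_term, ← mul_assoc, heat]
  module

theorem iteratedDeriv_jacobiTheta₂ (n : ℕ) {τ : ℂ} (hτ : 0 < τ.im) :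
    iteratedDeriv n (jacobiTheta₂ · τ)
      = fun u ↦ ∑' m : ℤ, (2 * π * I * m) ^ n * jacobiTheta₂_term m u τ := by
  induction n with
  | zero => simp [jacobiTheta₂]
  | succ n ih =>
    ext u
    rw [iteratedDeriv_succ, ih]
    exact (hasPartialDerivsAt_tsum_pow_mul_jacobiTheta₂_term n u hτ).hasDerivAt_left.deriv

theorem isHeatSolution_jacobiTheta₂ : IsHeatSolution jacobiTheta₂ := fun n u τ hτ ↦ by
  rw [iteratedDeriv_jacobiTheta₂ _ hτ, iteratedDeriv_jacobiTheta₂ _ hτ]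
  exact (hasPartialDerivsAt_tsum_pow_mul_jacobiTheta₂_term n u hτ).congr_of_im_pos hτ
    fun u τ hτ ↦ by rw [iteratedDeriv_jacobiTheta₂ n hτ]

/-! ### Theta series -/

theorem tsum_eq_tsum_add_tsum_of_isCompl_range {ι κ κ' E : Type*} [AddCommGroup E] [UniformSpace E]
    [IsUniformAddGroup E] [CompleteSpace E] [T2Space E] {f : ι → E} (hf : Summable f)
    {g : κ → ι} {h : κ' → ι} (hg : g.Injective) (hh : h.Injective)
    (hgh : IsCompl (Set.range g) (Set.range h)) :
    ∑' i, f i = ∑' k, f (g k) + ∑' k, f (h k) :=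
  ((hg.hasSum_range_iff.2 (hf.comp_injective hg).hasSum).add_isCompl hgh
    (hh.hasSum_range_iff.2 (hf.comp_injective hh).hasSum)).tsum_eq

theorem isCompl_range_odd_range_even :
    IsCompl (Set.range fun k : ℤ ↦ 2 * k + 1) (Set.range fun k : ℤ ↦ 2 * k) := by
  simpa only [range_two_mul, range_two_mul_add_one] using Int.isCompl_even_odd.symm

theorem isCompl_range_add_sub_range_add_sub_sub_one :
    IsCompl (Set.range fun k : ℤ × ℤ ↦ (k.1 + k.2, k.1 - k.2 - 1))
      (Set.range fun k : ℤ × ℤ ↦ (k.1 + k.2, k.1 - k.2)) := by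
  refine isCompl_iff.2 ⟨Set.disjoint_left.2 ?_, codisjoint_iff_le_sup.2 fun m _ ↦ ?_⟩
  · rintro _ ⟨k, rfl⟩ ⟨l, hl⟩
    simp only [Prod.mk.injEq] at hl
    omega
  · obtain ⟨k, hk | hk⟩ := Int.even_or_odd' (m.1 + m.2)
    · exact .inr ⟨(k, m.1 - k), by ext <;> simp only <;> omega⟩
    · exact .inl ⟨(k + 1, m.1 - k - 1), by ext <;> simp only <;> omega⟩

theorem jacobiTheta₂_term_two_mul_add_one (k : ℤ) (u τ : ℂ) :
    jacobiTheta₂_term (2 * k + 1) (u / 2) (τ / 4)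
      = cexp (π * I * τ * (k + 1 / 2) ^ 2 + 2 * π * I * u * (k + 1 / 2)) := by
  rw [jacobiTheta₂_term]
  push_cast
  ring_nf

theorem jacobiTheta₂_term_two_mul (k : ℤ) (u τ : ℂ) :
    jacobiTheta₂_term (2 * k) (u / 2) (τ / 4) = jacobiTheta₂_term k u τ := by
  rw [jacobiTheta₂_term, jacobiTheta₂_term]
  push_cast
  ring_nf

theorem theta2_eq_tsum (u τ : ℂ) :
    theta2 u τ = ∑' k : ℤ, jacobiTheta₂_term (2 * k + 1) (u / 2) (τ / 4) := by
  simp only [jacobiTheta₂_term_two_mul_add_one, theta2]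

theorem theta3_eq_jacobiTheta₂ (u τ : ℂ) : theta3 u τ = jacobiTheta₂ u τ :=
  tsum_congr fun k ↦ by rw [jacobiTheta₂_term]; ring_nf

theorem theta2_eq_jacobiTheta₂_sub (u : ℂ) {τ : ℂ} (hτ : 0 < τ.im) :
    theta2 u τ = jacobiTheta₂ (u / 2) (τ / 4) - jacobiTheta₂ u τ := by
  have hsum : Summable (jacobiTheta₂_term · (u / 2) (τ / 4)) :=
    (summable_jacobiTheta₂_term_iff _ _).2 (by simpa using hτ)
  rw [jacobiTheta₂, tsum_eq_tsum_add_tsum_of_isCompl_range hsum (fun _ _ h ↦ by grind)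
    (fun _ _ h ↦ by grind) isCompl_range_odd_range_even]
  simp only [jacobiTheta₂_term_two_mul, ← theta2_eq_tsum]
  rw [← jacobiTheta₂, add_sub_cancel_right]

theorem theta2_add_one (u τ : ℂ) : theta2 (u + 1) τ = -theta2 u τ := by
  rw [theta2, theta2, ← tsum_neg]
  refine tsum_congr fun k ↦ ?_
  rw [← exp_add_pi_mul_I]
  exact (congrArg cexp (by ring)).trans (exp_periodic.int_mul k _)

theorem theta2_neg (u τ : ℂ) : theta2 (-u) τ = theta2 u τ := by
  rw [theta2, ← (Equiv.subLeft (-1 : ℤ)).tsum_eq]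
  refine tsum_congr fun k ↦ ?_
  simp only [Equiv.subLeft_apply]
  push_cast
  ring_nf

theorem theta1_eq_neg_theta2 (u τ : ℂ) : theta1 u τ = -theta2 (u + 1 / 2) τ := rfl

theorem theta4_eq_theta3 (u τ : ℂ) : theta4 u τ = theta3 (u + 1 / 2) τ := rfl

theorem theta1_add_half (u τ : ℂ) : theta1 (u + 1 / 2) τ = theta2 u τ := by
  rw [theta1_eq_neg_theta2, add_assoc, add_halves, theta2_add_one, neg_neg]

theorem theta1_neg (u τ : ℂ) : theta1 (-u) τ = -theta1 u τ := by
  rw [theta1_eq_neg_theta2, ← theta2_neg, ← theta1_add_half]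
  ring_nf

theorem isHeatSolution_theta3 : IsHeatSolution theta3 := by
  rw [show theta3 = jacobiTheta₂ from funext₂ theta3_eq_jacobiTheta₂]
  exact isHeatSolution_jacobiTheta₂

theorem isHeatSolution_theta2 : IsHeatSolution theta2 := by
  refine ((isHeatSolution_jacobiTheta₂.comp_parabolic one_half_pos 0).sub
    isHeatSolution_jacobiTheta₂).congr fun u τ hτ ↦ ?_
  rw [theta2_eq_jacobiTheta₂_sub u hτ]
  push_cast
  ring_nf

theorem isHeatSolution_theta1 : IsHeatSolution theta1 :=
  (isHeatSolution_theta2.comp_parabolic one_pos (1 / 2)).neg.congr fun u τ _ ↦ by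
    simp [theta1_eq_neg_theta2]

theorem isHeatSolution_theta4 : IsHeatSolution theta4 :=
  (isHeatSolution_theta3.comp_parabolic one_pos (1 / 2)).congr fun u τ _ ↦ by
    simp [theta4_eq_theta3]

theorem summable_norm_jacobiTheta₂_term (u : ℂ) {τ : ℂ} (hτ : 0 < τ.im) :
    Summable fun k ↦ ‖jacobiTheta₂_term k u τ‖ :=
  ((summable_jacobiTheta₂_term_iff u τ).2 hτ).norm

theorem summable_norm_jacobiTheta₂_term_odd (u : ℂ) {τ : ℂ} (hτ : 0 < τ.im) :
    Summable fun k : ℤ ↦ ‖jacobiTheta₂_term (2 * k + 1) (u / 2) (τ / 4)‖ := by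
  have h := summable_norm_jacobiTheta₂_term (u / 2) (τ := τ / 4) (by simpa using hτ)
  exact h.comp_injective (i := fun k : ℤ ↦ 2 * k + 1) fun _ _ h ↦ by grind

theorem theta2_mul_theta2 (x y : ℂ) {τ : ℂ} (hτ : 0 < τ.im) :
    theta2 x (τ / 2) * theta2 y (τ / 2)
      = theta3 (x + y) τ * theta2 (x - y) τ + theta2 (x + y) τ * theta3 (x - y) τ := by
  have hτ2 : 0 < (τ / 2).im := by simpa using hτ
  have hsum := summable_mul_of_summable_norm (summable_norm_jacobiTheta₂_term_odd x hτ2)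
    (summable_norm_jacobiTheta₂_term_odd y hτ2)
  have hsplit := tsum_eq_tsum_add_tsum_of_isCompl_range hsum
    (fun k l h ↦ by simp only [Prod.mk.injEq] at h; ext <;> omega)
    (fun k l h ↦ by simp only [Prod.mk.injEq] at h; ext <;> omega)
    isCompl_range_add_sub_range_add_sub_sub_one
  simp only [theta2_eq_tsum, theta3_eq_jacobiTheta₂, jacobiTheta₂]
  rw [tsum_mul_tsum_of_summable_norm (summable_norm_jacobiTheta₂_term_odd x hτ2)
      (summable_norm_jacobiTheta₂_term_odd y hτ2), hsplit,
    tsum_mul_tsum_of_summable_norm (summable_norm_jacobiTheta₂_term _ hτ)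
      (summable_norm_jacobiTheta₂_term_odd _ hτ),
    tsum_mul_tsum_of_summable_norm (summable_norm_jacobiTheta₂_term_odd _ hτ)
      (summable_norm_jacobiTheta₂_term _ hτ)]
  congr 1 <;>
  · refine tsum_congr fun k ↦ ?_
    simp only [jacobiTheta₂_term, ← Complex.exp_add]
    push_cast
    ring_nf

/-! ### Landen's transformation -/

theorem theta3_add_one (u τ : ℂ) : theta3 (u + 1) τ = theta3 u τ := by
  rw [theta3_eq_jacobiTheta₂, theta3_eq_jacobiTheta₂, jacobiTheta₂_add_left]

theorem theta1_mul_theta1 (x y : ℂ) {τ : ℂ} (hτ : 0 < τ.im) :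
    theta1 x (τ / 2) * theta1 y (τ / 2)
      = theta3 (x + y) τ * theta2 (x - y) τ - theta2 (x + y) τ * theta3 (x - y) τ := by
  have hadd : x + 1 / 2 + (y + 1 / 2) = x + y + 1 := by ring
  rw [theta1_eq_neg_theta2, theta1_eq_neg_theta2, neg_mul_neg, theta2_mul_theta2 _ _ hτ,
    add_sub_add_right_eq_sub, hadd, theta2_add_one, theta3_add_one, neg_mul, ← sub_eq_add_neg]

section

variable {τ : ℂ}

theorem differentiable_theta1 (hτ : 0 < τ.im) : Differentiable ℂ (theta1 · τ) :=
  isHeatSolution_theta1.differentiable_left hτ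

theorem differentiable_theta2 (hτ : 0 < τ.im) : Differentiable ℂ (theta2 · τ) :=
  isHeatSolution_theta2.differentiable_left hτ

theorem differentiable_theta3 (hτ : 0 < τ.im) : Differentiable ℂ (theta3 · τ) :=
  isHeatSolution_theta3.differentiable_left hτ

theorem differentiable_theta4 (hτ : 0 < τ.im) : Differentiable ℂ (theta4 · τ) :=
  isHeatSolution_theta4.differentiable_left hτ

theorem im_half_pos (hτ : 0 < τ.im) : 0 < (τ / 2).im := by simpa using hτ

theorem theta2_zero_mul_theta2 (x : ℂ) (hτ : 0 < τ.im) :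
    theta2 0 (τ / 2) * theta2 x (τ / 2) = 2 * theta2 x τ * theta3 x τ := by
  have h := theta2_mul_theta2 x 0 hτ
  rw [add_zero, sub_zero] at h
  linear_combination h

theorem theta2_zero_mul_theta1 (x : ℂ) (hτ : 0 < τ.im) :
    theta2 0 (τ / 2) * theta1 x (τ / 2) = 2 * theta1 x τ * theta4 x τ := by
  have h := theta2_zero_mul_theta2 (x + 1 / 2) hτ
  simp only [theta1_eq_neg_theta2, theta4_eq_theta3]
  linear_combination -h

theorem theta2_zero_half_ne_zero {x : ℂ} (hτ : 0 < τ.im) (h₁ : theta1 x τ ≠ 0)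
    (h₄ : theta4 x τ ≠ 0) : theta2 0 (τ / 2) ≠ 0 :=
  left_ne_zero_of_mul (theta2_zero_mul_theta1 x hτ ▸ mul_ne_zero (mul_ne_zero two_ne_zero h₁) h₄)

theorem theta1_half_ne_zero {x : ℂ} (hτ : 0 < τ.im) (h₁ : theta1 x τ ≠ 0)
    (h₄ : theta4 x τ ≠ 0) : theta1 x (τ / 2) ≠ 0 :=
  right_ne_zero_of_mul (theta2_zero_mul_theta1 x hτ ▸ mul_ne_zero (mul_ne_zero two_ne_zero h₁) h₄)

theorem zeta1_half {x : ℂ} (hτ : 0 < τ.im) (h₁ : theta1 x τ ≠ 0) (h₄ : theta4 x τ ≠ 0) :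
    zeta1 x (τ / 2) = zeta1 x τ + zeta4 x τ := by
  calc zeta1 x (τ / 2) = logDeriv (fun v ↦ theta2 0 (τ / 2) * theta1 v (τ / 2)) x :=
        (logDeriv_const_mul x _ (theta2_zero_half_ne_zero hτ h₁ h₄)).symm
    _ = logDeriv (fun v ↦ 2 * (theta1 v τ * theta4 v τ)) x := by
        simp only [theta2_zero_mul_theta1 _ hτ, mul_assoc]
    _ = logDeriv (fun v ↦ theta1 v τ * theta4 v τ) x := logDeriv_const_mul x 2 two_ne_zero
    _ = zeta1 x τ + zeta4 x τ :=
        logDeriv_mul x h₁ h₄ (differentiable_theta1 hτ x) (differentiable_theta4 hτ x)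

theorem deriv_theta1_zero_mul_theta1 (x : ℂ) (hτ : 0 < τ.im) :
    deriv (theta1 · (τ / 2)) 0 * theta1 x (τ / 2)
      = 2 * (theta2 x τ * deriv (theta3 · τ) x - deriv (theta2 · τ) x * theta3 x τ) := by
  have hadd : HasDerivAt (x + ·) 1 0 := (hasDerivAt_id 0).const_add x
  have hsub : HasDerivAt (x - ·) (-1) 0 := (hasDerivAt_id 0).const_sub x
  have h2 (z : ℂ) := (differentiable_theta2 hτ z).hasDerivAt
  have h3 (z : ℂ) := (differentiable_theta3 hτ z).hasDerivAt
  have hl := ((differentiable_theta1 (im_half_pos hτ) 0).hasDerivAt.const_mul (theta1 x (τ / 2)))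
  have hr := (((h3 _).comp 0 hadd).mul ((h2 _).comp 0 hsub)).sub
    (((h2 _).comp 0 hadd).mul ((h3 _).comp 0 hsub))
  have h := hl.unique (hr.congr_of_eventuallyEq (.of_forall fun y ↦ theta1_mul_theta1 x y hτ))
  simp only [Function.comp_apply, add_zero, sub_zero] at h
  linear_combination h

theorem deriv_theta1_zero_mul_theta2 (x : ℂ) (hτ : 0 < τ.im) :
    deriv (theta1 · (τ / 2)) 0 * theta2 x (τ / 2)
      = 2 * (deriv (theta1 · τ) x * theta4 x τ - theta1 x τ * deriv (theta4 · τ) x) := by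
  have h := deriv_theta1_zero_mul_theta1 (x + 1 / 2) hτ
  have h1 : deriv (theta1 · τ) x = -deriv (theta2 · τ) (x + 1 / 2) := by
    simp only [theta1_eq_neg_theta2, deriv.fun_neg, deriv_comp_add_const (theta2 · τ)]
  have h4 : deriv (theta4 · τ) x = deriv (theta3 · τ) (x + 1 / 2) := by
    simp only [theta4_eq_theta3, deriv_comp_add_const (theta3 · τ)]
  rw [theta1_add_half] at h
  rw [h1, h4, theta1_eq_neg_theta2 x τ, theta4_eq_theta3]
  linear_combination h

theorem deriv_theta1_mul_theta1_add (x y : ℂ) (hτ : 0 < τ.im) :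
    deriv (theta1 · (τ / 2)) x * theta1 y (τ / 2) + theta1 x (τ / 2) * deriv (theta1 · (τ / 2)) y
      = 2 * (deriv (theta3 · τ) (x + y) * theta2 (x - y) τ
          - deriv (theta2 · τ) (x + y) * theta3 (x - y) τ) := by
  have hx : HasDerivAt (x + ·) 1 0 := (hasDerivAt_id 0).const_add x
  have hy : HasDerivAt (y + ·) 1 0 := (hasDerivAt_id 0).const_add y
  have hxy : HasDerivAt (fun t ↦ x + t + (y + t)) (1 + 1) 0 := hx.add hy
  have h1 (z : ℂ) := (differentiable_theta1 (im_half_pos hτ) z).hasDerivAt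
  have h2 (z : ℂ) := (differentiable_theta2 hτ z).hasDerivAt
  have h3 (z : ℂ) := (differentiable_theta3 hτ z).hasDerivAt
  have hl := ((h1 _).comp 0 hx).mul ((h1 _).comp 0 hy)
  have hr := (((h3 _).comp 0 hxy).mul_const (theta2 (x - y) τ)).sub
    (((h2 _).comp 0 hxy).mul_const (theta3 (x - y) τ))
  have h := hl.unique (hr.congr_of_eventuallyEq (.of_forall fun t ↦ by
    simpa using theta1_mul_theta1 (x + t) (y + t) hτ))
  simp only [Function.comp_apply, add_zero] at h
  linear_combination h

theorem theta1_theta2_addition_formula (x y : ℂ) (hτ : 0 < τ.im) :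
    deriv (theta1 · (τ / 2)) 0 * theta1 (x + y) (τ / 2) * (theta2 x (τ / 2) * theta2 y (τ / 2))
        + theta2 0 (τ / 2) * deriv (theta2 · (τ / 2)) (x + y)
          * (theta1 x (τ / 2) * theta1 y (τ / 2))
      = theta2 0 (τ / 2) * theta2 (x + y) (τ / 2)
        * (deriv (theta1 · (τ / 2)) x * theta1 y (τ / 2)
          + theta1 x (τ / 2) * deriv (theta1 · (τ / 2)) y) := by
  have h2 := differentiable_theta2 hτ (x + y)
  have h3 := differentiable_theta3 hτ (x + y)
  have hderiv : theta2 0 (τ / 2) * deriv (theta2 · (τ / 2)) (x + y)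
      = 2 * (deriv (theta2 · τ) (x + y) * theta3 (x + y) τ
          + theta2 (x + y) τ * deriv (theta3 · τ) (x + y)) := by
    rw [← deriv_const_mul_field, ← deriv_fun_mul h2 h3, ← deriv_const_mul_field]
    simp only [theta2_zero_mul_theta2 _ hτ, mul_assoc]
  rw [deriv_theta1_zero_mul_theta1 _ hτ, theta2_mul_theta2 _ _ hτ, hderiv,
    theta1_mul_theta1 _ _ hτ, theta2_zero_mul_theta2 _ hτ, deriv_theta1_mul_theta1_add _ _ hτ]
  ring

/-! ### Derivatives and addition formula of `Sp` -/

theorem deriv_logDeriv_add_sq {𝕜 : Type*} [NontriviallyNormedField 𝕜] {f : 𝕜 → 𝕜} {u : 𝕜}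
    (hf : DifferentiableAt 𝕜 f u) (hf' : DifferentiableAt 𝕜 (deriv f) u) (hu : f u ≠ 0) :
    deriv (logDeriv f) u + logDeriv f u ^ 2 = deriv (deriv f) u / f u := by
  rw [logDeriv, deriv_div hf' hf hu, Pi.div_apply]
  field_simp
  ring

/-- Since `F'' / F = ζ' + ζ²` for `ζ = F' / F`, this is the Cole–Hopf transformation to the Burgers
equation `4πi ∂ζ/∂τ = ∂(ζ' + ζ²)/∂u`. -/
theorem IsHeatSolution.hasPartialDerivsAt_logDeriv {F : ℂ → ℂ → ℂ} {u : ℂ}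
    (hF : IsHeatSolution F) (hτ : 0 < τ.im) (hu : F u τ ≠ 0) :
    HasPartialDerivsAt (fun u τ ↦ logDeriv (F · τ) u) (deriv (logDeriv (F · τ)) u)
      ((4 * π * I)⁻¹ * deriv (fun v ↦ deriv (deriv (F · τ)) v / F v τ) u) u τ := by
  have hd := hF.differentiable_left hτ
  have h := (hF 1 u τ hτ).div (hF 0 u τ hτ) hu
  simp only [iteratedDeriv_succ, iteratedDeriv_zero] at h
  convert h using 1
  · simp only [logDeriv_apply]
  · exact deriv_div hd.deriv.differentiableAt hd.differentiableAt hu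
  · rw [deriv_fun_div hd.deriv.deriv.differentiableAt hd.differentiableAt hu]
    ring

theorem zeta1_neg (u τ : ℂ) : zeta1 (-u) τ = -zeta1 u τ := by
  have h := deriv_comp_neg (theta1 · τ) u
  simp only [theta1_neg, deriv.fun_neg] at h
  rw [zeta1, zeta1, theta1_neg, ← neg_eq_iff_eq_neg.2 h]
  ring

theorem wp1_neg (u τ : ℂ) : wp1 (-u) τ = wp1 u τ := by
  have h := deriv_comp_neg (zeta1 · τ) u
  simp only [zeta1_neg, deriv.fun_neg] at h
  rw [wp1, wp1, ← h]

theorem differentiableAt_logDeriv {f : ℂ → ℂ} (hf : Differentiable ℂ f) {u : ℂ} (hu : f u ≠ 0) :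
    DifferentiableAt ℂ (logDeriv f) u :=
  hf.deriv.differentiableAt.div hf.differentiableAt hu

theorem hasDerivAt_zeta1 {u : ℂ} (hτ : 0 < τ.im) (hu : theta1 u τ ≠ 0) :
    HasDerivAt (zeta1 · τ) (-wp1 u τ) u := by
  rw [wp1, neg_neg]
  exact (differentiableAt_logDeriv (differentiable_theta1 hτ) hu).hasDerivAt

theorem hasDerivAt_Sp {u : ℂ} (hτ : 0 < τ.im) (h₁ : theta1 u τ ≠ 0) (h₄ : theta4 u τ ≠ 0) :
    HasDerivAt (Sp · τ) (Spp u τ) u :=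
  ((differentiableAt_logDeriv (differentiable_theta1 hτ) h₁).sub
    (differentiableAt_logDeriv (differentiable_theta4 hτ) h₄)).hasDerivAt

theorem eventually_theta1_ne_zero {u : ℂ} (hτ : 0 < τ.im) (hu : theta1 u τ ≠ 0) :
    ∀ᶠ v in 𝓝 u, theta1 v τ ≠ 0 :=
  (differentiable_theta1 hτ).continuous.continuousAt.eventually_ne hu

theorem eventually_theta4_ne_zero {u : ℂ} (hτ : 0 < τ.im) (hu : theta4 u τ ≠ 0) :
    ∀ᶠ v in 𝓝 u, theta4 v τ ≠ 0 :=
  (differentiable_theta4 hτ).continuous.continuousAt.eventually_ne hu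

theorem Sp_mul_theta1_half {u : ℂ} (hτ : 0 < τ.im) (h₁ : theta1 u τ ≠ 0) (h₄ : theta4 u τ ≠ 0) :
    Sp u τ * theta1 u (τ / 2)
      = deriv (theta1 · (τ / 2)) 0 / theta2 0 (τ / 2) * theta2 u (τ / 2) := by
  have h0 := theta2_zero_half_ne_zero hτ h₁ h₄
  have hu1 := theta2_zero_mul_theta1 u hτ
  have hu2 := deriv_theta1_zero_mul_theta2 u hτ
  rw [Sp, zeta1, zeta4]
  field_simp
  linear_combination (deriv (theta1 · τ) u * theta4 u τ - theta1 u τ * deriv (theta4 · τ) u) * hu1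
    - theta1 u τ * theta4 u τ * hu2

theorem Spp_add_Sp_mul_zeta1_half_mul_theta1_half {u : ℂ} (hτ : 0 < τ.im) (h₁ : theta1 u τ ≠ 0)
    (h₄ : theta4 u τ ≠ 0) :
    (Spp u τ + Sp u τ * zeta1 u (τ / 2)) * theta1 u (τ / 2)
      = deriv (theta1 · (τ / 2)) 0 / theta2 0 (τ / 2) * deriv (theta2 · (τ / 2)) u := by
  have hprod := (hasDerivAt_Sp hτ h₁ h₄).mul (differentiable_theta1 (im_half_pos hτ) u).hasDerivAt
  have hquot := (differentiable_theta2 (im_half_pos hτ) u).hasDerivAt.const_mul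
    (deriv (theta1 · (τ / 2)) 0 / theta2 0 (τ / 2))
  have heq : (fun v ↦ Sp v τ * theta1 v (τ / 2)) =ᶠ[𝓝 u]
      fun v ↦ deriv (theta1 · (τ / 2)) 0 / theta2 0 (τ / 2) * theta2 v (τ / 2) := by
    filter_upwards [eventually_theta1_ne_zero hτ h₁, eventually_theta4_ne_zero hτ h₄]
      with v hv₁ hv₄ using Sp_mul_theta1_half hτ hv₁ hv₄
  have h := hprod.unique (hquot.congr_of_eventuallyEq heq)
  rw [← h, zeta1]
  field_simp [theta1_half_ne_zero hτ h₁ h₄]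

theorem Sp_mul_Sp_add {v w : ℂ} (hτ : 0 < τ.im) (hv₁ : theta1 v τ ≠ 0) (hv₄ : theta4 v τ ≠ 0)
    (hw₁ : theta1 w τ ≠ 0) (hw₄ : theta4 w τ ≠ 0) (hvw₁ : theta1 (v + w) τ ≠ 0)
    (hvw₄ : theta4 (v + w) τ ≠ 0) :
    Sp v τ * Sp w τ + (Spp (v + w) τ + Sp (v + w) τ * zeta1 (v + w) (τ / 2))
      = Sp (v + w) τ * (zeta1 v (τ / 2) + zeta1 w (τ / 2)) := by
  have h0 := theta2_zero_half_ne_zero hτ hv₁ hv₄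
  have hv := theta1_half_ne_zero hτ hv₁ hv₄
  have hw := theta1_half_ne_zero hτ hw₁ hw₄
  have hvw := theta1_half_ne_zero hτ hvw₁ hvw₄
  rw [eq_div_of_mul_eq hv (Sp_mul_theta1_half hτ hv₁ hv₄),
    eq_div_of_mul_eq hw (Sp_mul_theta1_half hτ hw₁ hw₄),
    eq_div_of_mul_eq hvw (Spp_add_Sp_mul_zeta1_half_mul_theta1_half hτ hvw₁ hvw₄),
    eq_div_of_mul_eq hvw (Sp_mul_theta1_half hτ hvw₁ hvw₄), zeta1, zeta1]
  field_simp
  linear_combination deriv (theta1 · (τ / 2)) 0 * theta1_theta2_addition_formula v w hτ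

theorem deriv_Spp_add_Sp_mul_zeta1_half {v w : ℂ} (hτ : 0 < τ.im) (hv₁ : theta1 v τ ≠ 0)
    (hv₄ : theta4 v τ ≠ 0) (hw₁ : theta1 w τ ≠ 0) (hw₄ : theta4 w τ ≠ 0)
    (hvw₁ : theta1 (v + w) τ ≠ 0) (hvw₄ : theta4 (v + w) τ ≠ 0) :
    deriv (fun z ↦ Spp z τ + Sp z τ * zeta1 z (τ / 2)) (v + w)
      = Spp (v + w) τ * (zeta1 v (τ / 2) + zeta1 w (τ / 2)) - Sp (v + w) τ * wp1 w (τ / 2)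
        - Sp v τ * Spp w τ := by
  have hv : Tendsto (v + ·) (𝓝 w) (𝓝 (v + w)) := (continuous_const_add v).continuousAt
  have heq : (fun z ↦ Spp (v + z) τ + Sp (v + z) τ * zeta1 (v + z) (τ / 2)) =ᶠ[𝓝 w]
      fun z ↦ Sp (v + z) τ * (zeta1 v (τ / 2) + zeta1 z (τ / 2)) - Sp v τ * Sp z τ := by
    filter_upwards [eventually_theta1_ne_zero hτ hw₁, eventually_theta4_ne_zero hτ hw₄,
      hv.eventually (eventually_theta1_ne_zero hτ hvw₁),
      hv.eventually (eventually_theta4_ne_zero hτ hvw₄)] with z hz₁ hz₄ hvz₁ hvz₄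
    linear_combination Sp_mul_Sp_add hτ hv₁ hv₄ hz₁ hz₄ hvz₁ hvz₄
  have hζ := hasDerivAt_zeta1 (im_half_pos hτ) (theta1_half_ne_zero hτ hw₁ hw₄)
  have h := (((hasDerivAt_Sp hτ hvw₁ hvw₄).comp_const_add v w).mul
    (hζ.const_add (zeta1 v (τ / 2)))).sub ((hasDerivAt_Sp hτ hw₁ hw₄).const_mul (Sp v τ))
  rw [← deriv_comp_const_add, (h.congr_of_eventuallyEq heq).deriv]
  ring

theorem Spp_add_Sp_mul_zeta1_half {u : ℂ} (hτ : 0 < τ.im) (h₁ : theta1 u τ ≠ 0)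
    (h₄ : theta4 u τ ≠ 0) :
    Spp u τ + Sp u τ * zeta1 u (τ / 2)
      = deriv (deriv (theta1 · τ)) u / theta1 u τ - deriv (deriv (theta4 · τ)) u / theta4 u τ := by
  have hd₁ := differentiable_theta1 hτ
  have hd₄ := differentiable_theta4 hτ
  have hSpp : Spp u τ = deriv (logDeriv (theta1 · τ)) u - deriv (logDeriv (theta4 · τ)) u :=
    deriv_fun_sub (differentiableAt_logDeriv hd₁ h₁) (differentiableAt_logDeriv hd₄ h₄)
  rw [← deriv_logDeriv_add_sq hd₁.differentiableAt hd₁.deriv.differentiableAt h₁,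
    ← deriv_logDeriv_add_sq hd₄.differentiableAt hd₄.deriv.differentiableAt h₄, hSpp, Sp,
    zeta1_half hτ h₁ h₄]
  simp only [zeta1, zeta4, logDeriv_apply]
  ring

theorem hasPartialDerivsAt_Sp {u : ℂ} (hτ : 0 < τ.im) (h₁ : theta1 u τ ≠ 0)
    (h₄ : theta4 u τ ≠ 0) :
    HasPartialDerivsAt Sp (Spp u τ)
      ((4 * π * I)⁻¹ * deriv (fun v ↦ Spp v τ + Sp v τ * zeta1 v (τ / 2)) u) u τ := by
  have hd₁ := differentiable_theta1 hτ
  have hd₄ := differentiable_theta4 hτ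
  have heq : (fun v ↦ Spp v τ + Sp v τ * zeta1 v (τ / 2)) =ᶠ[𝓝 u]
      fun v ↦ deriv (deriv (theta1 · τ)) v / theta1 v τ
        - deriv (deriv (theta4 · τ)) v / theta4 v τ := by
    filter_upwards [eventually_theta1_ne_zero hτ h₁, eventually_theta4_ne_zero hτ h₄]
      with v hv₁ hv₄ using Spp_add_Sp_mul_zeta1_half hτ hv₁ hv₄
  have h := (isHeatSolution_theta1.hasPartialDerivsAt_logDeriv hτ h₁).sub
    (isHeatSolution_theta4.hasPartialDerivsAt_logDeriv hτ h₄)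
  rw [heq.deriv_eq, deriv_fun_sub
    (hd₁.deriv.deriv.differentiableAt.fun_div hd₁.differentiableAt h₁)
    (hd₄.deriv.deriv.differentiableAt.fun_div hd₄.differentiableAt h₄), mul_sub,
    (hasDerivAt_Sp hτ h₁ h₄).unique h.hasDerivAt_left]
  exact h

end

/-! ### The Gibbons–Tsarev system -/

theorem HasPartialDerivsAt.comp_hasFDerivAt {E : Type*} [NormedAddCommGroup E] [NormedSpace ℝ E]
    {f : ℂ → ℂ → ℂ} {a b : ℂ} {u τ : E → ℂ} {u' τ' : E →L[ℝ] ℂ} {x : E}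
    (hf : HasPartialDerivsAt f a b (u x) (τ x)) (hu : HasFDerivAt u u' x)
    (hτ : HasFDerivAt τ τ' x) :
    HasFDerivAt (fun y ↦ f (u y) (τ y)) (a • u' + b • τ') x := by
  refine ((hf.hasFDerivAt.restrictScalars ℝ).comp x (hu.prodMk hτ)).congr_fderiv ?_
  ext
  simp

section

variable {N : ℕ} {x : Fin N → ℝ}

theorem pdC_sq_mul {f g : (Fin N → ℝ) → ℂ} (hf : DifferentiableAt ℝ f x)
    (hg : DifferentiableAt ℝ g x) (j : Fin N) :
    pdC j (fun y ↦ f y ^ 2 * g y) x = 2 * f x * pdC j f x * g x + f x ^ 2 * pdC j g x := by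
  simp only [pdC]
  rw [fderiv_fun_mul (hf.fun_pow 2) hg, fderiv_fun_pow 2 hf]
  simp only [Nat.add_one_sub_one, pow_one, nsmul_eq_mul, Nat.cast_ofNat, add_apply, smul_apply,
    smul_eq_mul]
  ring

theorem pdC_const_mul (j : Fin N) (c : ℂ) (f : (Fin N → ℝ) → ℂ) :
    pdC j (fun y ↦ c * f y) x = c * pdC j f x := by
  have hfderiv : fderiv ℝ (c • f) x = c • fderiv ℝ f x := by rw [fderiv_const_smul_field]; rfl
  exact DFunLike.congr_fun hfderiv _

theorem differentiableAt_pdC {f : (Fin N → ℝ) → ℂ} (hf : ContDiffAt ℝ 2 f x) (i : Fin N) :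
    DifferentiableAt ℝ (pdC i f) x :=
  ((hf.fderiv_right le_rfl).differentiableAt one_ne_zero).clm_apply (differentiableAt_const _)

theorem hasFDerivAt_Sp_comp {u τ : (Fin N → ℝ) → ℂ} (hu : DifferentiableAt ℝ u x)
    (hτ : DifferentiableAt ℝ τ x) (him : 0 < (τ x).im) (h₁ : theta1 (u x) (τ x) ≠ 0)
    (h₄ : theta4 (u x) (τ x) ≠ 0) :
    HasFDerivAt (fun y ↦ Sp (u y) (τ y)) (Spp (u x) (τ x) • fderiv ℝ u x
      + ((4 * π * I)⁻¹ * deriv (fun v ↦ Spp v (τ x) + Sp v (τ x) * zeta1 v (τ x / 2)) (u x))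
        • fderiv ℝ τ x) x :=
  (hasPartialDerivsAt_Sp him h₁ h₄).comp_hasFDerivAt hu.hasFDerivAt hτ.hasFDerivAt

theorem pdC_Sp_comp {u τ : (Fin N → ℝ) → ℂ} {v : ℂ} {j : Fin N} (hu : DifferentiableAt ℝ u x)
    (hτ : DifferentiableAt ℝ τ x) (him : 0 < (τ x).im)
    (hGT : pdC j u x = 1 / (4 * π * I) * (zeta1 (v - u x) (τ x / 2) - zeta1 v (τ x / 2))
      * pdC j τ x)
    (hu₁ : theta1 (u x) (τ x) ≠ 0) (hu₄ : theta4 (u x) (τ x) ≠ 0)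
    (hv₁ : theta1 v (τ x) ≠ 0) (hv₄ : theta4 v (τ x) ≠ 0)
    (huv₁ : theta1 (u x - v) (τ x) ≠ 0) (huv₄ : theta4 (u x - v) (τ x) ≠ 0) :
    pdC j (fun y ↦ Sp (u y) (τ y)) x = -(1 / (4 * π * I))
      * (Sp (u x) (τ x) * wp1 (u x - v) (τ x / 2) + Sp v (τ x) * Spp (u x - v) (τ x))
      * pdC j τ x := by
  have hadd : v + (u x - v) = u x := add_sub_cancel v (u x)
  have hderiv := deriv_Spp_add_Sp_mul_zeta1_half him hv₁ hv₄ huv₁ huv₄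
    (by rwa [hadd]) (by rwa [hadd])
  rw [hadd] at hderiv
  rw [← neg_sub (u x) v, zeta1_neg] at hGT
  have hchain : pdC j (fun y ↦ Sp (u y) (τ y)) x = Spp (u x) (τ x) * pdC j u x + (4 * π * I)⁻¹
      * deriv (fun v ↦ Spp v (τ x) + Sp v (τ x) * zeta1 v (τ x / 2)) (u x) * pdC j τ x := by
    simp only [pdC, (hasFDerivAt_Sp_comp hu hτ him hu₁ hu₄).fderiv]
    rfl
  rw [hchain, hderiv, hGT]
  ring

theorem pdC_gMetric {ξ : Fin N → (Fin N → ℝ) → ℂ} {τ : (Fin N → ℝ) → ℂ} (i j : Fin N) :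
    pdC j (gMetric ξ τ i) x
      = 1 / (4 * π * I) * pdC j (fun y ↦ Sp (ξ i y) (τ y) ^ 2 * pdC i τ y) x := by
  rw [← pdC_const_mul]
  simp only [← mul_assoc]
  rfl

end

end

/-- Γ_{ij} is half the logarithmic λ_j-derivative of g_i (identity (c2)):
∂/∂λ_j [S'(ξ_i,τ)² ∂τ/∂λ_i] = −(1/(2πi)) S'(ξ_i)S'(ξ_j)S''(ξ_i−ξ_j)(∂τ/∂λ_i)(∂τ/∂λ_j);
equivalently 2Γ_{ij} g_i = ∂g_i/∂λ_j. -/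
theorem Gam_is_half_log_derivative
    (N : ℕ) (U : Set (Fin N → ℝ)) (hU : IsOpen U)
    (ξ : Fin N → (Fin N → ℝ) → ℂ) (τ : (Fin N → ℝ) → ℂ)
    (hξC2 : ∀ i, ContDiffOn ℝ 2 (ξ i) U)
    (hτC2 : ContDiffOn ℝ 2 τ U)
    (hup : ∀ x ∈ U, 0 < (τ x).im)
    -- the elliptic Gibbons–Tsarev system
    (hGT1 : ∀ j k : Fin N, j ≠ k → ∀ x ∈ U,
      pdC j (ξ k) x = 1 / (4 * (Real.pi : ℂ) * Complex.I)
        * (zeta1 (ξ j x - ξ k x) (τ x / 2) - zeta1 (ξ j x) (τ x / 2)) * pdC j τ x)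
    (hGT2 : ∀ j k : Fin N, j ≠ k → ∀ x ∈ U,
      pdC k (pdC j τ) x = 1 / (2 * (Real.pi : ℂ) * Complex.I)
        * wp1 (ξ k x - ξ j x) (τ x / 2) * pdC k τ x * pdC j τ x)
    -- nonvanishing of the theta-function values appearing in denominators
    (hnz1 : ∀ i, ∀ x ∈ U, theta1 (ξ i x) (τ x) ≠ 0)
    (hnz2 : ∀ i, ∀ x ∈ U, theta4 (ξ i x) (τ x) ≠ 0)
    (hnz3 : ∀ i, ∀ x ∈ U, theta1 (ξ i x) (τ x / 2) ≠ 0)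
    (hnz4 : ∀ i j : Fin N, i ≠ j → ∀ x ∈ U, theta1 (ξ i x - ξ j x) (τ x) ≠ 0)
    (hnz5 : ∀ i j : Fin N, i ≠ j → ∀ x ∈ U, theta4 (ξ i x - ξ j x) (τ x) ≠ 0)
    (hnz6 : ∀ i j : Fin N, i ≠ j → ∀ x ∈ U, theta1 (ξ i x - ξ j x) (τ x / 2) ≠ 0)
    (hnzS : ∀ i, ∀ x ∈ U, Sp (ξ i x) (τ x) ≠ 0) :
    ∀ i j : Fin N, i ≠ j → ∀ x ∈ U,
      pdC j (fun y => Sp (ξ i y) (τ y) ^ 2 * pdC i τ y) x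
          = -(1 / (2 * (Real.pi : ℂ) * Complex.I))
            * Sp (ξ i x) (τ x) * Sp (ξ j x) (τ x) * Spp (ξ i x - ξ j x) (τ x)
            * pdC i τ x * pdC j τ x
      ∧ 2 * Gam ξ τ i j x * gMetric ξ τ i x = pdC j (gMetric ξ τ i) x := by
  intro i j hij x hx
  have hU' := hU.mem_nhds hx
  have hξ := ((hξC2 i).contDiffAt hU').differentiableAt two_ne_zero
  have hτ := (hτC2.contDiffAt hU').differentiableAt two_ne_zero
  have hS := (hasFDerivAt_Sp_comp hξ hτ (hup x hx) (hnz1 i x hx) (hnz2 i x hx)).differentiableAt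
  have hpdS := pdC_Sp_comp hξ hτ (hup x hx) (hGT1 j i hij.symm x hx) (hnz1 i x hx) (hnz2 i x hx)
    (hnz1 j x hx) (hnz2 j x hx) (hnz4 i j hij x hx) (hnz5 i j hij x hx)
  have hpdτ := hGT2 i j hij x hx
  rw [← neg_sub, wp1_neg] at hpdτ
  have hpd : pdC j (fun y ↦ Sp (ξ i y) (τ y) ^ 2 * pdC i τ y) x
      = -(1 / (2 * Real.pi * I)) * Sp (ξ i x) (τ x) * Sp (ξ j x) (τ x)
        * Spp (ξ i x - ξ j x) (τ x) * pdC i τ x * pdC j τ x := by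
    rw [pdC_sq_mul hS (differentiableAt_pdC (hτC2.contDiffAt hU') i), hpdS, hpdτ]
    field_simp
    ring
  refine ⟨hpd, ?_⟩
  rw [pdC_gMetric, hpd, Gam, gMetric]
  have hSi := hnzS i x hx
  field_simp
  ring
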